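/- Privacy-leakage converse bound (middle/large key regime): under the converse setup, I(X^n; W | Z^n) ≥ Σ_{i=1}^n I(V_i; X_i | Z_i). -/

import Mathlib

open MeasureTheory

noncomputable section

/-- Probability mass `P[X = x]` of a finitely-valued random variable `X` on `(Ω, μ)`. -/
def pmass {Ω : Type*} [MeasurableSpace Ω] (μ : Measure Ω) {α : Type*}
    (X : Ω → α) (x : α) : ℝ :=
  (μ (X ⁻¹' {x})).toReal

/-- Shannon entropy `H(X)` (in nats) of a finitely-valued random variable. -/
def entropyRV {Ω : Type*} [MeasurableSpace Ω] (μ : Measure Ω) {α : Type*} [Fintype α]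
    (X : Ω → α) : ℝ :=
  ∑ x : α, Real.negMulLog (pmass μ X x)

/-- Conditional Shannon entropy `H(X | Y)`. -/
def condEntropyRV {Ω : Type*} [MeasurableSpace Ω] (μ : Measure Ω) {α β : Type*}
    [Fintype α] [Fintype β] (X : Ω → α) (Y : Ω → β) : ℝ :=
  entropyRV μ (fun ω => (X ω, Y ω)) - entropyRV μ Y

/-- Mutual information `I(X;Y)`. -/
def mutualInfoRV {Ω : Type*} [MeasurableSpace Ω] (μ : Measure Ω) {α β : Type*}
    [Fintype α] [Fintype β] (X : Ω → α) (Y : Ω → β) : ℝ :=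
  entropyRV μ X + entropyRV μ Y - entropyRV μ (fun ω => (X ω, Y ω))

/-- Conditional mutual information `I(X;Y|Z)`. -/
def condMutualInfoRV {Ω : Type*} [MeasurableSpace Ω] (μ : Measure Ω) {α β γ : Type*}
    [Fintype α] [Fintype β] [Fintype γ] (X : Ω → α) (Y : Ω → β) (Z : Ω → γ) : ℝ :=
  entropyRV μ (fun ω => (X ω, Z ω)) + entropyRV μ (fun ω => (Y ω, Z ω))
    - entropyRV μ Z - entropyRV μ (fun ω => (X ω, Y ω, Z ω))

/-- Expected value `E[f(X)]` of a function of a finitely-valued random variable. -/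
def expVal {Ω : Type*} [MeasurableSpace Ω] (μ : Measure Ω) {α : Type*} [Fintype α]
    (X : Ω → α) (f : α → ℝ) : ℝ :=
  ∑ a : α, pmass μ X a * f a

/-- Independence of two finitely-valued random variables, via their joint mass. -/
def IndepRV {Ω : Type*} [MeasurableSpace Ω] (μ : Measure Ω) {α β : Type*}
    (X : Ω → α) (Y : Ω → β) : Prop :=
  ∀ a b, pmass μ (fun ω => (X ω, Y ω)) (a, b) = pmass μ X a * pmass μ Y b

/-- Conditional independence of `A` and `C` given `B` (the Markov chain `A − B − C`)
for finitely-valued random variables, via joint masses. -/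
def CondIndepRV {Ω : Type*} [MeasurableSpace Ω] (μ : Measure Ω) {α β γ : Type*}
    (A : Ω → α) (B : Ω → β) (C : Ω → γ) : Prop :=
  ∀ a b c,
    pmass μ (fun ω => (A ω, B ω, C ω)) (a, b, c) * pmass μ B b
      = pmass μ (fun ω => (A ω, B ω)) (a, b) * pmass μ (fun ω => (B ω, C ω)) (b, c)

/-- `X` is uniformly distributed on its (finite) alphabet. -/
def UniformRV {Ω : Type*} [MeasurableSpace Ω] (μ : Measure Ω) {α : Type*} [Fintype α]
    (X : Ω → α) : Prop :=
  ∀ x, pmass μ X x = 1 / (Fintype.card α : ℝ)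

/-- The sequence `S = (S_1, …, S_n)` is i.i.d. with single-letter pmf `p`. -/
def HasIIDLaw {Ω : Type*} [MeasurableSpace Ω] (μ : Measure Ω) {α : Type*} {n : ℕ}
    (S : Ω → Fin n → α) (p : α → ℝ) : Prop :=
  ∀ v : Fin n → α, pmass μ S v = ∏ i, p (v i)

/-- `[a]⁻ = min {a, 0}`. -/
def negPartR (a : ℝ) : ℝ := min a 0

def FMeas {Ω : Type*} [MeasurableSpace Ω] {α : Type*} (X : Ω → α) : Prop :=
  ∀ s : Set α, MeasurableSet (X ⁻¹' s)

lemma pmass_nonneg' {Ω : Type*} [MeasurableSpace Ω] (μ : Measure Ω) {α : Type*}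
    (X : Ω → α) (x : α) : 0 ≤ pmass μ X x := ENNReal.toReal_nonneg

lemma pmass_marg {Ω : Type*} [MeasurableSpace Ω] (μ : Measure Ω) [IsProbabilityMeasure μ]
    {α β : Type*} [Fintype α] (X : Ω → α) (Y : Ω → β) (hX : FMeas X) (hY : FMeas Y) (y : β) :
    pmass μ Y y = ∑ x, pmass μ (fun ω => (X ω, Y ω)) (x, y) := by
  classical
  unfold pmass
  rw [← ENNReal.toReal_sum (fun _ _ => measure_ne_top _ _), ← measure_biUnion_finset]
  · congr 2
    ext ω
    simp
  · intro a _ b _ hab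
    refine Set.disjoint_left.2 ?_
    intro ω h1 h2
    simp at h1 h2
    exact hab (h1.1.symm.trans h2.1)
  · intro a _
    have : (fun ω => (X ω, Y ω)) ⁻¹' {(a, y)} = X ⁻¹' {a} ∩ Y ⁻¹' {y} := by
      ext ω; simp
    rw [this]
    exact (hX _).inter (hY _)

lemma entropy_congr {Ω : Type*} [MeasurableSpace Ω] (μ : Measure Ω)
    {α β : Type*} [Fintype α] [Fintype β] (A : Ω → α) (B : Ω → β)
    (h : ∀ ω ω', A ω = A ω' ↔ B ω = B ω') : entropyRV μ A = entropyRV μ B := by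
  classical
  have key : ∀ {δ : Type _} (D : Ω → δ) (d : δ), Real.negMulLog (pmass μ D d) ≠ 0 →
      ∃ ω, D ω = d := by
    intro δ D d hd
    by_contra hne
    push Not at hne
    apply hd
    have : D ⁻¹' {d} = ∅ := by ext ω; simp [hne ω]
    simp [pmass, this]
  have key' : ∀ {δ : Type _} (D : Ω → δ) (d : δ), Real.negMulLog (pmass μ D d) ≠ 0 →
      ∃ ω, D ω = d := by
    intro δ D d hd
    by_contra hne
    push Not at hne
    apply hd
    have : D ⁻¹' {d} = ∅ := by ext ω; simp [hne ω]
    simp [pmass, this]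
  have hp : ∀ ω, pmass μ A (A ω) = pmass μ B (B ω) := by
    intro ω
    unfold pmass
    congr 2
    ext ω'
    simpa using h ω' ω
  unfold entropyRV
  refine Finset.sum_bij_ne_zero (fun a _ ha => B (key A a ha).choose) ?_ ?_ ?_ ?_
  · intros; simp
  · intro a _ ha b _ hb hab
    have h1 := (key A a ha).choose_spec
    have h2 := (key A b hb).choose_spec
    rw [← h1, ← h2]
    exact (h _ _).2 hab
  · intro b _ hb
    obtain ⟨ω, rfl⟩ := key' B b hb
    have ha : Real.negMulLog (pmass μ A (A ω)) ≠ 0 := by rw [hp]; exact hb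
    refine ⟨A ω, Finset.mem_univ _, ha, ?_⟩
    exact (h _ _).1 (key A _ ha).choose_spec
  · intro a _ ha
    have h1 := (key A a ha).choose_spec
    rw [← hp, h1]

lemma cmi_expand {Ω : Type*} [MeasurableSpace Ω] (μ : Measure Ω) [IsProbabilityMeasure μ]
    {α β γ : Type*} [Fintype α] [Fintype β] [Fintype γ] (A : Ω → α) (B : Ω → β) (C : Ω → γ)
    (hA : FMeas A) (hB : FMeas B) (hC : FMeas C)
    (hAC : FMeas (fun ω => (A ω, C ω))) (hBC : FMeas (fun ω => (B ω, C ω))) :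
    entropyRV μ C + entropyRV μ (fun ω => (A ω, B ω, C ω))
      - entropyRV μ (fun ω => (A ω, C ω)) - entropyRV μ (fun ω => (B ω, C ω))
    = ∑ a, ∑ b, ∑ c, pmass μ (fun ω => (A ω, B ω, C ω)) (a, b, c) *
        (Real.log (pmass μ (fun ω => (A ω, C ω)) (a, c))
          + Real.log (pmass μ (fun ω => (B ω, C ω)) (b, c))
          - Real.log (pmass μ C c)
          - Real.log (pmass μ (fun ω => (A ω, B ω, C ω)) (a, b, c))) := by
  have m1 : ∀ b c, pmass μ (fun ω => (B ω, C ω)) (b, c) =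
      ∑ a, pmass μ (fun ω => (A ω, B ω, C ω)) (a, b, c) := fun b c =>
    pmass_marg μ A _ hA hBC _
  have m2 : ∀ a c, pmass μ (fun ω => (A ω, C ω)) (a, c) =
      ∑ b, pmass μ (fun ω => (A ω, B ω, C ω)) (a, b, c) := by
    intro a c
    rw [pmass_marg μ B _ hB hAC]
    refine Finset.sum_congr rfl fun b _ => ?_
    unfold pmass; congr 2; ext ω; simp; tauto
  have m3 : ∀ c, pmass μ C c = ∑ b, pmass μ (fun ω => (B ω, C ω)) (b, c) := fun c =>
    pmass_marg μ B _ hB hC _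
  have e1 : entropyRV μ C = -∑ a, ∑ b, ∑ c, pmass μ (fun ω => (A ω, B ω, C ω)) (a, b, c) *
      Real.log (pmass μ C c) := by
    unfold entropyRV Real.negMulLog
    rw [Finset.sum_comm]
    simp_rw [neg_mul, Finset.sum_neg_distrib]
    congr 1
    rw [Finset.sum_congr rfl (fun b _ => Finset.sum_comm)]
    rw [Finset.sum_comm]
    refine Finset.sum_congr rfl fun c _ => ?_
    simp_rw [← Finset.sum_mul]
    rw [m3]; simp_rw [m1]
  have e2 : entropyRV μ (fun ω => (A ω, C ω)) =
      -∑ a, ∑ b, ∑ c, pmass μ (fun ω => (A ω, B ω, C ω)) (a, b, c) *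
      Real.log (pmass μ (fun ω => (A ω, C ω)) (a, c)) := by
    unfold entropyRV Real.negMulLog
    rw [Fintype.sum_prod_type]
    simp_rw [neg_mul, Finset.sum_neg_distrib]
    congr 1
    refine Finset.sum_congr rfl fun a _ => ?_
    rw [Finset.sum_comm]
    refine Finset.sum_congr rfl fun c _ => ?_
    rw [← Finset.sum_mul, ← m2]
  have e3 : entropyRV μ (fun ω => (B ω, C ω)) =
      -∑ a, ∑ b, ∑ c, pmass μ (fun ω => (A ω, B ω, C ω)) (a, b, c) *
      Real.log (pmass μ (fun ω => (B ω, C ω)) (b, c)) := by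
    unfold entropyRV Real.negMulLog
    rw [Fintype.sum_prod_type]
    simp_rw [neg_mul, Finset.sum_neg_distrib]
    congr 1
    symm
    rw [Finset.sum_comm]
    refine Finset.sum_congr rfl fun b _ => ?_
    rw [Finset.sum_comm]
    refine Finset.sum_congr rfl fun c _ => ?_
    rw [← Finset.sum_mul, ← m1]
  have e4 : entropyRV μ (fun ω => (A ω, B ω, C ω)) =
      -∑ a, ∑ b, ∑ c, pmass μ (fun ω => (A ω, B ω, C ω)) (a, b, c) *
      Real.log (pmass μ (fun ω => (A ω, B ω, C ω)) (a, b, c)) := by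
    unfold entropyRV Real.negMulLog
    rw [Fintype.sum_prod_type]
    simp_rw [neg_mul, Finset.sum_neg_distrib]
    congr 1
    refine Finset.sum_congr rfl fun b _ => ?_
    rw [Fintype.sum_prod_type]
  rw [e1, e2, e3, e4]
  simp_rw [mul_sub, mul_add, Finset.sum_sub_distrib, Finset.sum_add_distrib]
  ring

lemma entropy_submod {Ω : Type*} [MeasurableSpace Ω] (μ : Measure Ω) [IsProbabilityMeasure μ]
    {α β γ : Type*} [Fintype α] [Fintype β] [Fintype γ] (A : Ω → α) (B : Ω → β) (C : Ω → γ)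
    (hA : FMeas A) (hB : FMeas B) (hC : FMeas C)
    (hAC : FMeas (fun ω => (A ω, C ω))) (hBC : FMeas (fun ω => (B ω, C ω))) :
    entropyRV μ C + entropyRV μ (fun ω => (A ω, B ω, C ω))
      ≤ entropyRV μ (fun ω => (A ω, C ω)) + entropyRV μ (fun ω => (B ω, C ω)) := by
  have hx := cmi_expand μ A B C hA hB hC hAC hBC
  have m1 : ∀ b c, pmass μ (fun ω => (B ω, C ω)) (b, c) =
      ∑ a, pmass μ (fun ω => (A ω, B ω, C ω)) (a, b, c) := fun b c =>
    pmass_marg μ A _ hA hBC _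
  have m2 : ∀ a c, pmass μ (fun ω => (A ω, C ω)) (a, c) =
      ∑ b, pmass μ (fun ω => (A ω, B ω, C ω)) (a, b, c) := by
    intro a c
    rw [pmass_marg μ B _ hB hAC]
    refine Finset.sum_congr rfl fun b _ => ?_
    unfold pmass; congr 2; ext ω; simp; tauto
  have m3 : ∀ c, pmass μ C c = ∑ b, pmass μ (fun ω => (B ω, C ω)) (b, c) := fun c =>
    pmass_marg μ B _ hB hC _
  have m4 : ∀ c, pmass μ C c = ∑ b, pmass μ (fun ω => (A ω, C ω)) (b, c) := fun c =>
    pmass_marg μ A _ hA hC _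
  have n1 := pmass_nonneg' μ (fun ω => (A ω, B ω, C ω))
  have n2 := pmass_nonneg' μ (fun ω => (A ω, C ω))
  have n3 := pmass_nonneg' μ (fun ω => (B ω, C ω))
  have n4 := pmass_nonneg' μ C
  have hle : ∑ a, ∑ b, ∑ c, pmass μ (fun ω => (A ω, B ω, C ω)) (a, b, c) *
        (Real.log (pmass μ (fun ω => (A ω, C ω)) (a, c))
          + Real.log (pmass μ (fun ω => (B ω, C ω)) (b, c))
          - Real.log (pmass μ C c)
          - Real.log (pmass μ (fun ω => (A ω, B ω, C ω)) (a, b, c))) ≤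
      ∑ a, ∑ b, ∑ c, (pmass μ (fun ω => (A ω, C ω)) (a, c) *
        pmass μ (fun ω => (B ω, C ω)) (b, c) / pmass μ C c
        - pmass μ (fun ω => (A ω, B ω, C ω)) (a, b, c)) := by
    refine Finset.sum_le_sum fun a _ => Finset.sum_le_sum fun b _ => Finset.sum_le_sum fun c _ => ?_
    have l1 : pmass μ (fun ω => (A ω, B ω, C ω)) (a, b, c) ≤
        pmass μ (fun ω => (B ω, C ω)) (b, c) := by
      rw [m1]
      exact Finset.single_le_sum (f := fun a => pmass μ (fun ω => (A ω, B ω, C ω)) (a, b, c))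
        (fun _ _ => n1 _) (Finset.mem_univ a)
    have l2 : pmass μ (fun ω => (A ω, B ω, C ω)) (a, b, c) ≤
        pmass μ (fun ω => (A ω, C ω)) (a, c) := by
      rw [m2]
      exact Finset.single_le_sum (f := fun b => pmass μ (fun ω => (A ω, B ω, C ω)) (a, b, c))
        (fun _ _ => n1 _) (Finset.mem_univ b)
    have l3 : pmass μ (fun ω => (B ω, C ω)) (b, c) ≤ pmass μ C c := by
      rw [m3]
      exact Finset.single_le_sum (f := fun b => pmass μ (fun ω => (B ω, C ω)) (b, c))
        (fun _ _ => n3 _) (Finset.mem_univ b)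
    have n1' := n1 (a, b, c)
    have n2' := n2 (a, c)
    have n3' := n3 (b, c)
    have n4' := n4 c
    generalize pmass μ (fun ω => (A ω, B ω, C ω)) (a, b, c) = p at *
    generalize pmass μ (fun ω => (A ω, C ω)) (a, c) = q at *
    generalize pmass μ (fun ω => (B ω, C ω)) (b, c) = r at *
    generalize pmass μ C c = s at *
    rcases n1'.eq_or_lt with h0 | h0
    · rw [← h0]
      simp
      positivity
    · have hq : 0 < q := by linarith
      have hr : 0 < r := by linarith
      have hs : 0 < s := by linarith
      have : Real.log q + Real.log r - Real.log s - Real.log p = Real.log (q * r / s / p) := by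
        rw [Real.log_div (by positivity) (by positivity), Real.log_div (by positivity) (by positivity),
          Real.log_mul (by positivity) (by positivity)]
      rw [this]
      have h2 := Real.log_le_sub_one_of_pos (x := q * r / s / p) (by positivity)
      calc p * Real.log (q * r / s / p) ≤ p * (q * r / s / p - 1) := by gcongr
        _ = _ := by field_simp
  have hz : ∑ a, ∑ b, ∑ c, (pmass μ (fun ω => (A ω, C ω)) (a, c) *
        pmass μ (fun ω => (B ω, C ω)) (b, c) / pmass μ C c
        - pmass μ (fun ω => (A ω, B ω, C ω)) (a, b, c)) = 0 := by
    rw [Finset.sum_congr rfl (fun b _ => Finset.sum_comm)]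
    rw [Finset.sum_comm]
    refine Finset.sum_eq_zero fun c _ => ?_
    have : ∀ a, ∑ b, (pmass μ (fun ω => (A ω, C ω)) (a, c) *
        pmass μ (fun ω => (B ω, C ω)) (b, c) / pmass μ C c
        - pmass μ (fun ω => (A ω, B ω, C ω)) (a, b, c)) =
        pmass μ (fun ω => (A ω, C ω)) (a, c) * (pmass μ C c / pmass μ C c)
          - pmass μ (fun ω => (A ω, C ω)) (a, c) := by
      intro a
      rw [Finset.sum_sub_distrib, ← m2, ← Finset.sum_div, ← Finset.mul_sum, ← m3, mul_div_assoc]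
    simp_rw [this]
    rw [Finset.sum_sub_distrib, ← Finset.sum_mul, ← m4]
    rcases eq_or_ne (pmass μ C c) 0 with h | h
    · simp [h]
    · rw [div_self h]; ring
  linarith

lemma entropy_factor {Ω : Type*} [MeasurableSpace Ω] (μ : Measure Ω) [IsProbabilityMeasure μ]
    {α β γ : Type*} [Fintype α] [Fintype β] [Fintype γ] (A : Ω → α) (B : Ω → β) (C : Ω → γ)
    (hA : FMeas A) (hB : FMeas B) (hC : FMeas C)
    (hAC : FMeas (fun ω => (A ω, C ω))) (hBC : FMeas (fun ω => (B ω, C ω)))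
    (f : α → γ → ℝ) (g : β → γ → ℝ)
    (hfg : ∀ a b c, pmass μ (fun ω => (A ω, B ω, C ω)) (a, b, c) = f a c * g b c) :
    entropyRV μ C + entropyRV μ (fun ω => (A ω, B ω, C ω))
      = entropyRV μ (fun ω => (A ω, C ω)) + entropyRV μ (fun ω => (B ω, C ω)) := by
  have hx := cmi_expand μ A B C hA hB hC hAC hBC
  have m1 : ∀ b c, pmass μ (fun ω => (B ω, C ω)) (b, c) = (∑ a, f a c) * g b c := fun b c => by
    rw [pmass_marg μ A _ hA hBC _, Finset.sum_mul]; simp_rw [hfg]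
  have m2 : ∀ a c, pmass μ (fun ω => (A ω, C ω)) (a, c) = f a c * ∑ b, g b c := by
    intro a c
    rw [pmass_marg μ B _ hB hAC, Finset.mul_sum]
    refine Finset.sum_congr rfl fun b _ => ?_
    rw [← hfg]
    unfold pmass; congr 2; ext ω; simp; tauto
  have m3 : ∀ c, pmass μ C c = (∑ a, f a c) * ∑ b, g b c := fun c => by
    rw [pmass_marg μ B _ hB hC _, Finset.mul_sum]; simp_rw [m1]
  have : ∑ a, ∑ b, ∑ c, pmass μ (fun ω => (A ω, B ω, C ω)) (a, b, c) *
        (Real.log (pmass μ (fun ω => (A ω, C ω)) (a, c))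
          + Real.log (pmass μ (fun ω => (B ω, C ω)) (b, c))
          - Real.log (pmass μ C c)
          - Real.log (pmass μ (fun ω => (A ω, B ω, C ω)) (a, b, c))) = 0 := by
    refine Finset.sum_eq_zero fun a _ => Finset.sum_eq_zero fun b _ => Finset.sum_eq_zero fun c _ => ?_
    by_cases hp : f a c * g b c = 0
    · rw [hfg, hp, zero_mul]
    · have n1 := pmass_nonneg' μ (fun ω => (A ω, B ω, C ω)) (a, b, c)
      have l1 : pmass μ (fun ω => (A ω, B ω, C ω)) (a, b, c) ≤
          pmass μ (fun ω => (B ω, C ω)) (b, c) := by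
        rw [pmass_marg μ A _ hA hBC _]
        exact Finset.single_le_sum (f := fun a => pmass μ (fun ω => (A ω, B ω, C ω)) (a, b, c))
          (fun _ _ => pmass_nonneg' _ _ _) (Finset.mem_univ a)
      have l3 : pmass μ (fun ω => (B ω, C ω)) (b, c) ≤ pmass μ C c := by
        rw [pmass_marg μ B _ hB hC _]
        exact Finset.single_le_sum (f := fun b => pmass μ (fun ω => (B ω, C ω)) (b, c))
          (fun _ _ => pmass_nonneg' _ _ _) (Finset.mem_univ b)
      have hpos : pmass μ C c ≠ 0 := by
        have : 0 < pmass μ (fun ω => (A ω, B ω, C ω)) (a, b, c) :=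
          lt_of_le_of_ne n1 (by rw [hfg]; exact Ne.symm hp)
        linarith
      rw [m3] at hpos
      rw [hfg, m1, m2, m3]
      obtain ⟨h1, h2⟩ := mul_ne_zero_iff.1 hp
      obtain ⟨h3, h4⟩ := mul_ne_zero_iff.1 hpos
      rw [Real.log_mul h1 h4, Real.log_mul h3 h2, Real.log_mul h3 h4, Real.log_mul h1 h2]
      ring
  linarith

lemma FMeas.of_det {Ω : Type*} [MeasurableSpace Ω] {τ α : Type*} {T : Ω → τ} (hT : FMeas T)
    {A : Ω → α} (h : ∀ ω ω', T ω = T ω' → A ω = A ω') : FMeas A := by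
  intro s
  have : A ⁻¹' s = T ⁻¹' (T '' (A ⁻¹' s)) := by
    ext ω
    simp only [Set.mem_preimage, Set.mem_image]
    constructor
    · intro hω; exact ⟨ω, hω, rfl⟩
    · rintro ⟨ω', h1, h2⟩
      rw [← h _ _ h2]; exact h1
  rw [this]
  exact hT _

lemma entropy_submod_det {Ω : Type*} [MeasurableSpace Ω] (μ : Measure Ω) [IsProbabilityMeasure μ]
    {τ α β γ : Type*} [Fintype α] [Fintype β] [Fintype γ] (T : Ω → τ) (hT : FMeas T)
    (A : Ω → α) (B : Ω → β) (C : Ω → γ)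
    (hA : ∀ ω ω', T ω = T ω' → A ω = A ω') (hB : ∀ ω ω', T ω = T ω' → B ω = B ω')
    (hC : ∀ ω ω', T ω = T ω' → C ω = C ω') :
    entropyRV μ C + entropyRV μ (fun ω => (A ω, B ω, C ω))
      ≤ entropyRV μ (fun ω => (A ω, C ω)) + entropyRV μ (fun ω => (B ω, C ω)) :=
  entropy_submod μ A B C (hT.of_det hA) (hT.of_det hB) (hT.of_det hC)
    (hT.of_det fun ω ω' h => by rw [hA ω ω' h, hC ω ω' h])
    (hT.of_det fun ω ω' h => by rw [hB ω ω' h, hC ω ω' h])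

lemma cond_data {Ω : Type*} [MeasurableSpace Ω] (μ : Measure Ω) [IsProbabilityMeasure μ]
    {τ α β γ δ : Type*} [Fintype α] [Fintype β] [Fintype γ] [Fintype δ]
    (T : Ω → τ) (hT : FMeas T)
    (R : Ω → α) (B : Ω → β) (C : Ω → γ) (D : Ω → δ)
    (hR : ∀ ω ω', T ω = T ω' → R ω = R ω') (hB : ∀ ω ω', T ω = T ω' → B ω = B ω')
    (hC : ∀ ω ω', T ω = T ω' → C ω = C ω') (hD : ∀ ω ω', R ω = R ω' → D ω = D ω')
    (h : entropyRV μ C + entropyRV μ (fun ω => (R ω, B ω, C ω))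
      = entropyRV μ (fun ω => (R ω, C ω)) + entropyRV μ (fun ω => (B ω, C ω))) :
    entropyRV μ C + entropyRV μ (fun ω => (D ω, B ω, C ω))
      = entropyRV μ (fun ω => (D ω, C ω)) + entropyRV μ (fun ω => (B ω, C ω)) := by
  have hD' : ∀ ω ω', T ω = T ω' → D ω = D ω' := fun ω ω' h => hD _ _ (hR _ _ h)
  have h1 := entropy_submod_det μ T hT D B C hD' hB hC
  have h2 := entropy_submod_det μ T hT R B (fun ω => (D ω, C ω)) hR hB
    (fun ω ω' h => by rw [hD' _ _ h, hC _ _ h])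
  have e1 : entropyRV μ (fun ω => (R ω, B ω, D ω, C ω)) = entropyRV μ (fun ω => (R ω, B ω, C ω)) := by
    apply entropy_congr
    intro ω ω'
    have := hD ω ω'
    simp only [Prod.mk.injEq]; tauto
  have e2 : entropyRV μ (fun ω => (R ω, D ω, C ω)) = entropyRV μ (fun ω => (R ω, C ω)) := by
    apply entropy_congr
    intro ω ω'
    have := hD ω ω'
    simp only [Prod.mk.injEq]; tauto
  have e3 : entropyRV μ (fun ω => (B ω, D ω, C ω)) = entropyRV μ (fun ω => (D ω, B ω, C ω)) := by
    apply entropy_congr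
    intro ω ω'
    simp only [Prod.mk.injEq]; tauto
  rw [e1, e2, e3] at h2
  linarith

lemma cond_data2 {Ω : Type*} [MeasurableSpace Ω] (μ : Measure Ω) [IsProbabilityMeasure μ]
    {τ α β γ δ ε : Type*} [Fintype α] [Fintype β] [Fintype γ] [Fintype δ] [Fintype ε]
    (T : Ω → τ) (hT : FMeas T)
    (R : Ω → α) (B : Ω → β) (C : Ω → γ) (D : Ω → δ) (E : Ω → ε)
    (hR : ∀ ω ω', T ω = T ω' → R ω = R ω') (hB : ∀ ω ω', T ω = T ω' → B ω = B ω')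
    (hC : ∀ ω ω', T ω = T ω' → C ω = C ω') (hD : ∀ ω ω', R ω = R ω' → D ω = D ω')
    (hE : ∀ ω ω', B ω = B ω' → E ω = E ω')
    (h : entropyRV μ C + entropyRV μ (fun ω => (R ω, B ω, C ω))
      = entropyRV μ (fun ω => (R ω, C ω)) + entropyRV μ (fun ω => (B ω, C ω))) :
    entropyRV μ C + entropyRV μ (fun ω => (D ω, E ω, C ω))
      = entropyRV μ (fun ω => (D ω, C ω)) + entropyRV μ (fun ω => (E ω, C ω)) := by
  have h1 := cond_data μ T hT R B C D hR hB hC hD h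
  have e1 : entropyRV μ (fun ω => (D ω, B ω, C ω)) = entropyRV μ (fun ω => (B ω, D ω, C ω)) := by
    apply entropy_congr
    intro ω ω'
    simp only [Prod.mk.injEq]; tauto
  have e2 : entropyRV μ (fun ω => (D ω, E ω, C ω)) = entropyRV μ (fun ω => (E ω, D ω, C ω)) := by
    apply entropy_congr
    intro ω ω'
    simp only [Prod.mk.injEq]; tauto
  rw [e1] at h1
  have h2 := cond_data μ T hT B D C E hB (fun ω ω' h => hD _ _ (hR _ _ h)) hC hE (by linarith)
  linarith

section steps
variable {𝒳 𝒳t 𝒴 𝒵 𝒲 𝒦 : Type}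
    [Fintype 𝒳] [Fintype 𝒳t] [Fintype 𝒴] [Fintype 𝒵] [Fintype 𝒲] [Fintype 𝒦]
    {Ω : Type} [MeasurableSpace Ω] (μ : MeasureTheory.Measure Ω)
    [MeasureTheory.IsProbabilityMeasure μ]
    {n : ℕ} (S : Ω → Fin n → 𝒳t × 𝒳 × 𝒴 × 𝒵) (K : Ω → 𝒦)

lemma step_a (hS : FMeas S) (p : 𝒳t × 𝒳 × 𝒴 × 𝒵 → ℝ) (hiid : HasIIDLaw μ S p) (i : Fin n) :
    entropyRV μ (fun ω => ((fun j : {j : Fin n // i.1 ≤ j.1} => (S ω j.1).2.1),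
        (fun j => (S ω j).2.2.2)))
      - entropyRV μ (fun ω => ((fun j : {j : Fin n // i.1 + 1 ≤ j.1} => (S ω j.1).2.1),
        (fun j => (S ω j).2.2.2)))
    = entropyRV μ (fun ω => ((S ω i).2.1, (S ω i).2.2.2)) - entropyRV μ (fun ω => (S ω i).2.2.2) := by
  classical
  have hR : ∀ ω ω', S ω = S ω' → S ω i = S ω' i := fun ω ω' h => by rw [h]
  have hB : ∀ ω ω', S ω = S ω' → (fun j : {j : Fin n // j ≠ i} => S ω j.1) =
    (fun j : {j : Fin n // j ≠ i} => S ω' j.1) := fun ω ω' h => by rw [h]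
  have hC : ∀ ω ω', S ω = S ω' → (fun _ : Ω => ()) ω = (fun _ : Ω => ()) ω' := fun ω ω' h => rfl
  have h0 := entropy_factor μ (fun ω => S ω i) (fun ω => fun j : {j : Fin n // j ≠ i} => S ω j.1)
    (fun _ => ()) (hS.of_det hR) (hS.of_det hB) (hS.of_det hC)
    (hS.of_det fun ω ω' h => by rw [h]) (hS.of_det fun ω ω' h => by rw [h])
    (fun a _ => p a) (fun b _ => ∏ j, p (b j)) (by
      intro a b c
      have := hiid (fun j => if h : j ≠ i then b ⟨j, h⟩ else a)
      rw [← Fintype.prod_subtype_mul_prod_subtype (fun j => j ≠ i), mul_comm] at this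
      convert this using 1
      · unfold pmass
        congr 2
        ext ω
        simp only [Set.mem_preimage, Set.mem_singleton_iff, Prod.mk.injEq, funext_iff,
          Subtype.forall]
        grind
      · congr 1
        · rw [Finset.prod_eq_single (⟨i, by simp⟩ : {j : Fin n // ¬ j ≠ i})]
          · simp
          · intro b _ hb
            exact absurd (Subtype.ext (not_not.1 b.2)) hb
          · simp
        · refine Finset.prod_congr rfl fun j _ => ?_
          simp [j.2])
  have h1 := cond_data2 μ S hS _ _ _ (fun ω => ((S ω i).2.1, (S ω i).2.2.2))
    (fun ω => ((fun j : {j : Fin n // i.1 + 1 ≤ j.1} => (S ω j.1).2.1),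
        (fun j : {j : Fin n // j ≠ i} => (S ω j.1).2.2.2))) hR hB hC
    (fun ω ω' h => by simp only [h])
    (fun ω ω' h => by
      simp only [funext_iff, Subtype.forall, Prod.mk.injEq] at h ⊢
      grind) h0
  have h2 := cond_data2 μ S hS _ _ _ (fun ω => (S ω i).2.2.2)
    (fun ω => ((fun j : {j : Fin n // i.1 + 1 ≤ j.1} => (S ω j.1).2.1),
        (fun j : {j : Fin n // j ≠ i} => (S ω j.1).2.2.2))) hR hB hC
    (fun ω ω' h => by simp only [h])
    (fun ω ω' h => by
      simp only [funext_iff, Subtype.forall, Prod.mk.injEq] at h ⊢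
      grind) h0
  have e1 : entropyRV μ (fun ω => ((fun j : {j : Fin n // i.1 ≤ j.1} => (S ω j.1).2.1),
        (fun j => (S ω j).2.2.2))) = entropyRV μ (fun ω => (((S ω i).2.1, (S ω i).2.2.2),
      ((fun j : {j : Fin n // i.1 + 1 ≤ j.1} => (S ω j.1).2.1),
        (fun j : {j : Fin n // j ≠ i} => (S ω j.1).2.2.2)), ())) := by
    apply entropy_congr
    intro ω ω'
    simp only [funext_iff, Subtype.forall, Prod.mk.injEq]
    grind
  have e2 : entropyRV μ (fun ω => ((fun j : {j : Fin n // i.1 + 1 ≤ j.1} => (S ω j.1).2.1),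
        (fun j => (S ω j).2.2.2))) = entropyRV μ (fun ω => ((S ω i).2.2.2,
      ((fun j : {j : Fin n // i.1 + 1 ≤ j.1} => (S ω j.1).2.1),
        (fun j : {j : Fin n // j ≠ i} => (S ω j.1).2.2.2)), ())) := by
    apply entropy_congr
    intro ω ω'
    simp only [funext_iff, Subtype.forall, Prod.mk.injEq]
    grind
  have e3 : entropyRV μ (fun ω => ((S ω i).2.1, (S ω i).2.2.2)) =
      entropyRV μ (fun ω => (((S ω i).2.1, (S ω i).2.2.2), ())) := by
    apply entropy_congr
    intro ω ω'
    simp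
  have e4 : entropyRV μ (fun ω => (S ω i).2.2.2) =
      entropyRV μ (fun ω => ((S ω i).2.2.2, ())) := by
    apply entropy_congr
    intro ω ω'
    simp
  linarith

lemma step_b (hS : FMeas (fun ω => (K ω, S ω)))
    (pX : 𝒳 → ℝ) (pXt : 𝒳 → 𝒳t → ℝ) (pYZ : 𝒳 → 𝒴 × 𝒵 → ℝ)
    (hiid : HasIIDLaw μ S (fun s => pX s.2.1 * pXt s.2.1 s.1 * pYZ s.2.1 s.2.2))
    (hKind : IndepRV μ K S) (W : Ω → 𝒲)
    (hW : ∀ ω ω', K ω = K ω' → (∀ j, (S ω j).1 = (S ω' j).1) → W ω = W ω') (i : Fin n) :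
    entropyRV μ (fun ω => ((fun j : {j : Fin n // i.1 ≤ j.1} => (S ω j.1).2.1), W ω,
        (fun j => (S ω j).2.2.2)))
      - entropyRV μ (fun ω => ((fun j : {j : Fin n // i.1 + 1 ≤ j.1} => (S ω j.1).2.1), W ω,
        (fun j => (S ω j).2.2.2)))
    ≤ entropyRV μ (fun ω => ((W ω, (fun j : {j : Fin n // i < j} => (S ω j.1).2.2.1),
          (fun j : {j : Fin n // j.1 < i} => (S ω j.1).2.2.2)), (S ω i).2.1, (S ω i).2.2.2))
      - entropyRV μ (fun ω => ((W ω, (fun j : {j : Fin n // i < j} => (S ω j.1).2.2.1),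
          (fun j : {j : Fin n // j.1 < i} => (S ω j.1).2.2.2)), (S ω i).2.2.2)) := by
  classical
  let R := fun ω => (K ω, (fun j : {j : Fin n // i < j} => (S ω j.1).1),
    (fun j : {j : Fin n // ¬ i < j} => S ω j.1))
  let B := fun ω => (fun j : {j : Fin n // i < j} => (S ω j.1).2.2.1)
  let C := fun ω => (fun j : {j : Fin n // i < j} => ((S ω j.1).2.1, (S ω j.1).2.2.2))
  let D1 := fun ω => ((S ω i).2.1, W ω, (fun j : {j : Fin n // ¬ i < j} => (S ω j.1).2.2.2))
  let D2 := fun ω => (W ω, (fun j : {j : Fin n // ¬ i < j} => (S ω j.1).2.2.2))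
  let V := fun ω => ((W ω, (fun j : {j : Fin n // i < j} => (S ω j.1).2.2.1),
          (fun j : {j : Fin n // j.1 < i} => (S ω j.1).2.2.2)), (S ω i).2.2.2)
  let T := fun ω => (K ω, S ω)
  have hR : ∀ ω ω', T ω = T ω' → R ω = R ω' := fun ω ω' h => by
    simp only [T, Prod.mk.injEq] at h; simp only [R, h.1, h.2]
  have hB : ∀ ω ω', T ω = T ω' → B ω = B ω' := fun ω ω' h => by
    simp only [T, Prod.mk.injEq] at h; simp only [B, h.2]
  have hC : ∀ ω ω', T ω = T ω' → C ω = C ω' := fun ω ω' h => by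
    simp only [T, Prod.mk.injEq] at h; simp only [C, h.2]
  have hWR : ∀ ω ω', R ω = R ω' → W ω = W ω' := fun ω ω' h => by
    simp only [R, Prod.mk.injEq, funext_iff, Subtype.forall] at h
    refine hW _ _ h.1 fun j => ?_
    by_cases hj : i < j
    · exact h.2.1 j hj
    · rw [h.2.2 j hj]
  have hD2 : ∀ ω ω', R ω = R ω' → D2 ω = D2 ω' := fun ω ω' h => by
    have := hWR _ _ h
    simp only [R, D2, Prod.mk.injEq, funext_iff, Subtype.forall] at h ⊢
    refine ⟨this, fun j hj => by rw [h.2.2 j hj]⟩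
  have hD1 : ∀ ω ω', R ω = R ω' → D1 ω = D1 ω' := fun ω ω' h => by
    have := hWR _ _ h
    simp only [R, D1, Prod.mk.injEq, funext_iff, Subtype.forall] at h ⊢
    refine ⟨by rw [h.2.2 i (lt_irrefl _)], this, fun j hj => by rw [h.2.2 j hj]⟩
  have hV : ∀ ω ω', T ω = T ω' → V ω = V ω' := fun ω ω' h => by
    have := hWR _ _ (hR _ _ h)
    simp only [T, Prod.mk.injEq] at h
    simp only [V, h.2, this]
  have hXi : ∀ ω ω', T ω = T ω' → (S ω i).2.1 = (S ω' i).2.1 := fun ω ω' h => by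
    simp only [T, Prod.mk.injEq] at h
    simp only [h.2]
  have h0 := entropy_factor μ R B C (hS.of_det hR) (hS.of_det hB) (hS.of_det hC)
    (hS.of_det fun ω ω' h => by rw [hR _ _ h, hC _ _ h])
    (hS.of_det fun ω ω' h => by rw [hB _ _ h, hC _ _ h])
    (fun a c => pmass μ K a.1 * (∏ j, (pX (a.2.2 j).2.1 * pXt (a.2.2 j).2.1 (a.2.2 j).1 *
        pYZ (a.2.2 j).2.1 (a.2.2 j).2.2)) * ∏ j, (pX (c j).1 * pXt (c j).1 (a.2.1 j)))
    (fun b c => ∏ j, pYZ (c j).1 (b j, (c j).2)) (by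
      rintro ⟨k, xt, sl⟩ b c
      let s : Fin n → 𝒳t × 𝒳 × 𝒴 × 𝒵 := fun j => if h : i < j then
        (xt ⟨j, h⟩, (c ⟨j, h⟩).1, b ⟨j, h⟩, (c ⟨j, h⟩).2) else sl ⟨j, h⟩
      have h1 := hKind k s
      rw [hiid, ← Fintype.prod_subtype_mul_prod_subtype (fun j => i < j)] at h1
      have h2 : pmass μ (fun ω => (R ω, B ω, C ω)) ((k, xt, sl), b, c) =
          pmass μ (fun ω => (K ω, S ω)) (k, s) := by
        unfold pmass
        congr 2
        ext ω
        simp only [Set.mem_preimage, Set.mem_singleton_iff, R, B, C, s, Prod.mk.injEq, funext_iff,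
          Subtype.forall]
        constructor
        · rintro ⟨⟨hk, h1, h2⟩, h3, h4⟩
          refine ⟨hk, fun j => ?_⟩
          by_cases hj : i < j
          · simp only [hj, dite_true]
            rw [← h1 j hj, ← h3 j hj, ← h4 j hj]
          · simp only [hj, dite_false]
            exact h2 j hj
        · rintro ⟨hk, h⟩
          refine ⟨⟨hk, fun j hj => ?_, fun j hj => ?_⟩, fun j hj => ?_, fun j hj => ?_⟩ <;>
            simp [h j, hj]
      rw [h2, h1]
      have h3 : ∀ j : {j : Fin n // i < j}, s j.1 = (xt j, (c j).1, b j, (c j).2) := by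
        intro j; simp [s, j.2]
      have h4 : ∀ j : {j : Fin n // ¬ i < j}, s j.1 = sl j := by
        intro j; simp only [s, j.2, dite_false]
      simp only [h3, h4]
      simp only [Finset.prod_mul_distrib]
      ring)
  have h1 := cond_data μ T hS R B C D1 hR hB hC hD1 h0
  have h2 := cond_data μ T hS R B C D2 hR hB hC hD2 h0
  have h3 := entropy_submod_det μ T hS (fun ω => (S ω i).2.1) C V hXi hC hV
  have e1 : entropyRV μ (fun ω => ((fun j : {j : Fin n // i.1 ≤ j.1} => (S ω j.1).2.1), W ω,
        (fun j => (S ω j).2.2.2))) = entropyRV μ (fun ω => (D1 ω, C ω)) := by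
    apply entropy_congr
    intro ω ω'
    simp only [D1, C, funext_iff, Subtype.forall, Prod.mk.injEq]
    grind
  have e2 : entropyRV μ (fun ω => ((fun j : {j : Fin n // i.1 + 1 ≤ j.1} => (S ω j.1).2.1), W ω,
        (fun j => (S ω j).2.2.2))) = entropyRV μ (fun ω => (D2 ω, C ω)) := by
    apply entropy_congr
    intro ω ω'
    simp only [D2, C, funext_iff, Subtype.forall, Prod.mk.injEq]
    grind
  have e3 : entropyRV μ (fun ω => ((S ω i).2.1, C ω, V ω)) =
      entropyRV μ (fun ω => (D1 ω, B ω, C ω)) := by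
    apply entropy_congr
    intro ω ω'
    simp only [D1, B, C, V, funext_iff, Subtype.forall, Prod.mk.injEq]
    grind
  have e4 : entropyRV μ (fun ω => (C ω, V ω)) =
      entropyRV μ (fun ω => (D2 ω, B ω, C ω)) := by
    apply entropy_congr
    intro ω ω'
    simp only [D2, B, C, V, funext_iff, Subtype.forall, Prod.mk.injEq]
    grind
  have e5 : entropyRV μ (fun ω => ((W ω, (fun j : {j : Fin n // i < j} => (S ω j.1).2.2.1),
          (fun j : {j : Fin n // j.1 < i} => (S ω j.1).2.2.2)), (S ω i).2.1, (S ω i).2.2.2)) =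
      entropyRV μ (fun ω => ((S ω i).2.1, V ω)) := by
    apply entropy_congr
    intro ω ω'
    simp only [V, Prod.mk.injEq]
    tauto
  rw [e1, e2, e5]
  change _ ≤ _ - entropyRV μ V
  linarith

end steps

/-- **Privacy-leakage converse bound (middle/large key regime)**: under the converse
setup, `I(Xⁿ; W | Zⁿ) ≥ ∑ᵢ I(Vᵢ; Xᵢ | Zᵢ)`. -/
theorem privacy_leakage_converse_middle_key
    {𝒳 𝒳t 𝒴 𝒵 𝒲 𝒦 : Type}
    [Fintype 𝒳] [Fintype 𝒳t] [Fintype 𝒴] [Fintype 𝒵] [Fintype 𝒲] [Fintype 𝒦]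
    [MeasurableSpace 𝒳] [DiscreteMeasurableSpace 𝒳]
    [MeasurableSpace 𝒳t] [DiscreteMeasurableSpace 𝒳t]
    [MeasurableSpace 𝒴] [DiscreteMeasurableSpace 𝒴]
    [MeasurableSpace 𝒵] [DiscreteMeasurableSpace 𝒵]
    [MeasurableSpace 𝒲] [DiscreteMeasurableSpace 𝒲]
    [MeasurableSpace 𝒦] [DiscreteMeasurableSpace 𝒦]
    {Ω : Type} [MeasurableSpace Ω] (μ : MeasureTheory.Measure Ω)
    [MeasureTheory.IsProbabilityMeasure μ]
    {n : ℕ} (S : Ω → Fin n → 𝒳t × 𝒳 × 𝒴 × 𝒵) (K : Ω → 𝒦)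
    (hSmeas : Measurable S) (hKmeas : Measurable K)
    (pX : 𝒳 → ℝ) (pXt : 𝒳 → 𝒳t → ℝ) (pYZ : 𝒳 → 𝒴 × 𝒵 → ℝ)
    (hpX0 : ∀ x, 0 ≤ pX x) (hpX1 : ∑ x, pX x = 1)
    (hpXt0 : ∀ x a, 0 ≤ pXt x a) (hpXt1 : ∀ x, ∑ a, pXt x a = 1)
    (hpYZ0 : ∀ x yz, 0 ≤ pYZ x yz) (hpYZ1 : ∀ x, ∑ yz, pYZ x yz = 1)
    (hiid : HasIIDLaw μ S (fun s => pX s.2.1 * pXt s.2.1 s.1 * pYZ s.2.1 s.2.2))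
    (hKunif : UniformRV μ K) (hKind : IndepRV μ K S)
    (enc : (Fin n → 𝒳t) → 𝒦 → 𝒲)
    :
    condMutualInfoRV μ (fun ω => fun j => (S ω j).2.1)
      (fun ω => enc (fun j => (S ω j).1) (K ω))
      (fun ω => fun j => (S ω j).2.2.2)
    ≥ ∑ i : Fin n,
        condMutualInfoRV μ
          (fun ω => (enc (fun j => (S ω j).1) (K ω),
          (fun j : {j : Fin n // i < j} => (S ω j.1).2.2.1),
          (fun j : {j : Fin n // j.1 < i} => (S ω j.1).2.2.2)))
          (fun ω => (S ω i).2.1) (fun ω => (S ω i).2.2.2) := by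
  have hT : FMeas (fun ω => (K ω, S ω)) := by
    intro s
    exact (hKmeas.prodMk hSmeas) (MeasurableSet.of_discrete)
  have hS : FMeas S := hT.of_det fun ω ω' h => (Prod.mk.inj h).2
  have hb := fun i => step_b μ S K hT pX pXt pYZ hiid hKind
    (fun ω => enc (fun j => (S ω j).1) (K ω))
    (fun ω ω' h1 h2 => by simp only [h1, h2]) i
  have ha := fun i => step_a μ S hS _ hiid i
  let F : ℕ → ℝ := fun m => entropyRV μ (fun ω =>
    ((fun j : {j : Fin n // m ≤ j.1} => (S ω j.1).2.1), (fun j => (S ω j).2.2.2)))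
  let G : ℕ → ℝ := fun m => entropyRV μ (fun ω =>
    ((fun j : {j : Fin n // m ≤ j.1} => (S ω j.1).2.1), enc (fun j => (S ω j).1) (K ω),
      (fun j => (S ω j).2.2.2)))
  have hF : ∑ i : Fin n, (F i.1 - F (i.1 + 1)) = F 0 - F n := by
    rw [Fin.sum_univ_eq_sum_range (fun i => F i - F (i + 1)), Finset.sum_range_sub']
  have hG : ∑ i : Fin n, (G i.1 - G (i.1 + 1)) = G 0 - G n := by
    rw [Fin.sum_univ_eq_sum_range (fun i => G i - G (i + 1)), Finset.sum_range_sub']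
  have e1 : entropyRV μ (fun ω => ((fun j => (S ω j).2.1), (fun j => (S ω j).2.2.2))) = F 0 := by
    apply entropy_congr
    intro ω ω'
    simp [funext_iff]
  have e2 : entropyRV μ (fun ω => (fun j => (S ω j).2.2.2)) = F n := by
    apply entropy_congr
    intro ω ω'
    simp only [Prod.mk.injEq, funext_iff, Subtype.forall]
    grind
  have e3 : entropyRV μ (fun ω => ((fun j => (S ω j).2.1), enc (fun j => (S ω j).1) (K ω),
      (fun j => (S ω j).2.2.2))) = G 0 := by
    apply entropy_congr
    intro ω ω'
    simp [funext_iff]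
  have e4 : entropyRV μ (fun ω => (enc (fun j => (S ω j).1) (K ω),
      (fun j => (S ω j).2.2.2))) = G n := by
    apply entropy_congr
    intro ω ω'
    rw [Prod.mk.injEq, Prod.mk.injEq, Prod.mk.injEq]
    constructor
    · intro h
      exact ⟨funext fun j => absurd j.1.2 (not_lt.2 j.2), h⟩
    · intro h; exact h.2
  have hL : condMutualInfoRV μ (fun ω => fun j => (S ω j).2.1)
      (fun ω => enc (fun j => (S ω j).1) (K ω))
      (fun ω => fun j => (S ω j).2.2.2) = (F 0 - F n) - (G 0 - G n) := by
    unfold condMutualInfoRV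
    rw [e1, e2, e3, e4]
    ring
  rw [hL, ← hF, ← hG, ← Finset.sum_sub_distrib]
  refine Finset.sum_le_sum fun i _ => ?_
  have ha' : F i.1 - F (i.1 + 1) = _ := ha i
  have hb' : G i.1 - G (i.1 + 1) ≤ _ := hb i
  unfold condMutualInfoRV
  linarith
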